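/- arXiv:1707.07629 — 2 statements merged into one kernel-verified Lean document; each statement's English description precedes it below -/
import Mathlib

section
/- Let M and M′ be n×n integer matrices, both with nonzero determinant and both in right Hermite normal form. If there exists an n×n unimodular matrix U with M = M′·U, then M = M′. -/
open Matrix

/-- An `n × n` integer matrix is unimodular if its determinant is `1` or `-1`. -/
def Unimodular {n : ℕ} (U : Matrix (Fin n) (Fin n) ℤ) : Prop :=
  U.det = 1 ∨ U.det = -1

/-- A square integer matrix is in right Hermite normal form: it is lower triangular,
its diagonal entries are positive, and each entry to the left of the diagonal is
nonnegative and smaller than the diagonal entry of its row. -/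
def RHNF {n : ℕ} (H : Matrix (Fin n) (Fin n) ℤ) : Prop :=
  (∀ i j, i < j → H i j = 0) ∧
  (∀ i, 0 < H i i) ∧
  (∀ i j, j < i → 0 ≤ H i j ∧ H i j < H i i)

/-!
Let `A` be lower triangular with nonzero diagonal. Forward substitution determines the entries of
`v` from those of `A *ᵥ v`, and the first nonzero entry of `v` makes the corresponding entry of
`A *ᵥ v` a nonzero multiple of a diagonal entry of `A`.

If two matrices in right Hermite normal form are right multiples of each other, their diagonals
divide each other, hence agree. Each row of their difference then consists of differences of
residues modulo the common diagonal entry, none of which is a nonzero multiple of it. As this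
difference is a right multiple of one of the two matrices, forward substitution makes the
cofactor zero.
-/

section LowerTriangular

variable {m R : Type*} [Fintype m] [LinearOrder m] {A : Matrix m m R}

theorem mulVec_apply_eq_diag_mul_of_forall_lt_eq_zero [NonUnitalNonAssocSemiring R]
    (hA : A.IsLowerTriangular) {v : m → R} {i : m} (hv : ∀ k < i, v k = 0) :
    (A *ᵥ v) i = A i i * v i := by
  rw [mulVec, dotProduct, Fintype.sum_eq_single i]
  intro k hki
  rcases hki.lt_or_gt with hlt | hgt
  · rw [hv k hlt, mul_zero]
  · rw [hA hgt, zero_mul]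

variable [NonUnitalSemiring R] [NoZeroDivisors R]

theorem eq_zero_of_diag_dvd_mulVec_imp_eq_zero (hA : A.IsLowerTriangular)
    (hdiag : ∀ i, A i i ≠ 0) {v : m → R} {i : m}
    (hv : ∀ k ≤ i, A k k ∣ (A *ᵥ v) k → (A *ᵥ v) k = 0) : v i = 0 := by
  induction i using WellFoundedLT.induction with
  | ind i ih =>
    have hlt : ∀ k < i, v k = 0 := fun k hk ↦ ih k hk fun l hl ↦ hv l (hl.trans hk.le)
    have hi : (A *ᵥ v) i = A i i * v i := mulVec_apply_eq_diag_mul_of_forall_lt_eq_zero hA hlt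
    have hzero : A i i * v i = 0 := hi ▸ hv i le_rfl (hi ▸ dvd_mul_right _ _)
    exact (mul_eq_zero.mp hzero).resolve_left (hdiag i)

theorem diag_dvd_diag_mul (hA : A.IsLowerTriangular) (hdiag : ∀ i, A i i ≠ 0)
    {B : Matrix m m R} (hAB : (A * B).IsLowerTriangular) (i : m) : A i i ∣ (A * B) i i := by
  have hB : ∀ k < i, B k i = 0 := fun k hk ↦
    eq_zero_of_diag_dvd_mulVec_imp_eq_zero (v := B.col i) hA hdiag
      fun _ hl _ ↦ hAB (hl.trans_lt hk)
  exact Dvd.intro (B i i) (mulVec_apply_eq_diag_mul_of_forall_lt_eq_zero (v := B.col i) hA hB).symm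

end LowerTriangular

theorem Unimodular.isUnit_det {n : ℕ} {U : Matrix (Fin n) (Fin n) ℤ} (hU : Unimodular U) :
    IsUnit U.det :=
  Int.isUnit_iff.mpr hU

namespace RHNF

variable {n : ℕ} {H K : Matrix (Fin n) (Fin n) ℤ}

theorem isLowerTriangular (hH : RHNF H) : H.IsLowerTriangular :=
  fun i j hij ↦ hH.1 i j hij

theorem diag_pos (hH : RHNF H) (i : Fin n) : 0 < H i i :=
  hH.2.1 i

theorem diag_dvd_diag_of_eq_mul (hH : RHNF H) (hK : K.IsLowerTriangular)
    {U : Matrix (Fin n) (Fin n) ℤ} (hKH : K = H * U) (i : Fin n) : H i i ∣ K i i := by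
  subst hKH
  exact diag_dvd_diag_mul hH.isLowerTriangular (fun k ↦ (hH.diag_pos k).ne') hK i

theorem sub_eq_zero_of_diag_dvd_sub (hH : RHNF H) (hK : RHNF K) {i j : Fin n}
    (hdiag : H i i = K i i) (hdvd : H i i ∣ K i j - H i j) : K i j - H i j = 0 := by
  rcases lt_trichotomy i j with hij | rfl | hji
  · rw [hH.1 i j hij, hK.1 i j hij, sub_zero]
  · rw [hdiag, sub_self]
  · obtain ⟨hH_nonneg, hH_lt⟩ := hH.2.2 i j hji
    obtain ⟨hK_nonneg, hK_lt⟩ := hK.2.2 i j hji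
    exact Int.eq_zero_of_abs_lt_dvd hdvd
      (abs_sub_lt_of_nonneg_of_lt hK_nonneg (hdiag ▸ hK_lt) hH_nonneg hH_lt)

theorem eq_of_eq_mul_of_eq_mul (hH : RHNF H) (hK : RHNF K) {U V : Matrix (Fin n) (Fin n) ℤ}
    (hKH : K = H * U) (hHK : H = K * V) : K = H := by
  have hdiag (i : Fin n) : H i i = K i i :=
    Int.dvd_antisymm (hH.diag_pos i).le (hK.diag_pos i).le
      (hH.diag_dvd_diag_of_eq_mul hK.isLowerTriangular hKH i)
      (hK.diag_dvd_diag_of_eq_mul hH.isLowerTriangular hHK i)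
  have hsub : H * (U - 1) = K - H := by rw [mul_sub, mul_one, hKH]
  have hcofactor : U - 1 = 0 := by
    ext i j
    have hcol : H *ᵥ (U - 1).col j = (K - H).col j := by rw [← hsub]; rfl
    refine eq_zero_of_diag_dvd_mulVec_imp_eq_zero (v := (U - 1).col j) hH.isLowerTriangular
      (fun k ↦ (hH.diag_pos k).ne') fun k _ ↦ ?_
    rw [hcol]
    exact hH.sub_eq_zero_of_diag_dvd_sub hK (hdiag k)
  rw [hKH, sub_eq_zero.mp hcofactor, mul_one]

end RHNF

theorem stmt_2 {n : ℕ} (M M' : Matrix (Fin n) (Fin n) ℤ)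
    (hM : M.det ≠ 0) (hM' : M'.det ≠ 0) (h1 : RHNF M) (h2 : RHNF M')
    (U : Matrix (Fin n) (Fin n) ℤ) (hU : Unimodular U) (h : M = M' * U) :
    M = M' := by
  have hM'M : M' = M * U⁻¹ := by rw [h, mul_nonsing_inv_cancel_right U M' hU.isUnit_det]
  exact h2.eq_of_eq_mul_of_eq_mul h1 h hM'M
end

section
/- Let A be an r×n integer matrix of rank r (0 < r < n) of the form [N O], where N is an r×r matrix in left Hermite normal form and O is the zero block, and let B be an (n−r)×n integer matrix. Suppose the stacked n×n matrix [A; B] satisfies [A; B] = W·R for some n×n unimodular matrix W, where R is an n×n nonsingular integer matrix in left Hermite normal form. Then A equals the matrix formed by the first r rows of R. -/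
open Matrix

/-- A square integer matrix is in left Hermite normal form: it is lower triangular,
its diagonal entries are positive, and each entry below the diagonal is nonnegative
and smaller than the diagonal entry of its column. -/
def LHNF {n : ℕ} (H : Matrix (Fin n) (Fin n) ℤ) : Prop :=
  (∀ i j, i < j → H i j = 0) ∧
  (∀ i, 0 < H i i) ∧
  (∀ i j, j < i → 0 ≤ H i j ∧ H i j < H j j)

/-- The matrix `[A; B]` obtained by stacking `A` above `B`. -/
def stack {r k n : ℕ} (A : Matrix (Fin r) (Fin n) ℤ) (B : Matrix (Fin k) (Fin n) ℤ) :
    Matrix (Fin (r + k)) (Fin n) ℤ :=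
  (Matrix.fromRows A B).submatrix finSumFinEquiv.symm id

/-!
Multiplying a row vector `u` by a lower triangular matrix `L` turns its last nonzero entry `u j`
into `u j * L j j`. Hence an integer vector `u` is zero as soon as every entry of `u ᵥ* L` is
smaller in absolute value than the diagonal entry of `L` in the same column. If `H = U * K` with
`H`, `K` in left Hermite normal form and `U` unimodular, this applies to the rows of `U` beyond the
diagonal, so that `U` is lower triangular with unit diagonal, and then to the rows of `U - 1`,
because `(U - 1) * K = H - K` has small entries; therefore `H = K`. For `[A; B] = W * R` the same
principle shows that the upper right block of `W` vanishes, so that `N = W₁₁ * R₁₁` for the leading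
blocks, with `W₁₁` unimodular, and the uniqueness just described gives `N = R₁₁`.
-/

section LowerTriangular

variable {ι α : Type*} [Fintype ι] [LinearOrder ι]

lemma vecMul_apply_of_isLowerTriangular [NonUnitalNonAssocSemiring α] {L : Matrix ι ι α}
    (hL : L.IsLowerTriangular) {u : ι → α} {j : ι} (hu : ∀ l, j < l → u l = 0) :
    (u ᵥ* L) j = u j * L j j := by
  refine Finset.sum_eq_single j (fun l _ hl => ?_) (by simp)
  rcases hl.lt_or_gt with hlj | hjl
  · simp only [hL hlj, mul_zero]
  · rw [hu l hjl, zero_mul]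

lemma eq_zero_of_abs_vecMul_lt_abs_diag {L : Matrix ι ι ℤ} (hL : L.IsLowerTriangular) {u : ι → ℤ}
    {s : Set ι} (hs : IsUpperSet s) (hu : ∀ j ∈ s, |(u ᵥ* L) j| < |L j j|) : ∀ j ∈ s, u j = 0 := by
  intro j
  induction j using WellFoundedGT.induction with
  | ind j ih =>
    intro hj
    have hentry : (u ᵥ* L) j = u j * L j j :=
      vecMul_apply_of_isLowerTriangular hL fun l hjl => ih l hjl (hs hjl.le hj)
    have hlt : |u j| * |L j j| < 1 * |L j j| := by
      simpa only [hentry, abs_mul, one_mul] using hu j hj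
    exact Int.abs_lt_one_iff.mp (lt_of_mul_lt_mul_right hlt (abs_nonneg _))

lemma eq_zero_of_vecMul_eq_zero_of_isUpperSet {L : Matrix ι ι ℤ} (hL : L.IsLowerTriangular)
    (hdiag : ∀ i, L i i ≠ 0) {u : ι → ℤ} {s : Set ι} (hs : IsUpperSet s)
    (hu : ∀ j ∈ s, (u ᵥ* L) j = 0) : ∀ j ∈ s, u j = 0 :=
  eq_zero_of_abs_vecMul_lt_abs_diag hL hs fun j hj => by
    simpa only [hu j hj, abs_zero, abs_pos] using hdiag j

lemma isLowerTriangular_of_mul {U L : Matrix ι ι ℤ} (hL : L.IsLowerTriangular)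
    (hdiag : ∀ i, L i i ≠ 0) (hUL : (U * L).IsLowerTriangular) : U.IsLowerTriangular :=
  fun i j hij => eq_zero_of_vecMul_eq_zero_of_isUpperSet hL hdiag (isUpperSet_Ioi i)
    (fun l hl => by rw [← Matrix.mul_apply_eq_vecMul, hUL hl]) j hij

lemma isUnit_diag_of_isLowerTriangular [CommRing α] {L : Matrix ι ι α}
    (hL : L.IsLowerTriangular) (hdet : IsUnit L.det) (i : ι) : IsUnit (L i i) := by
  rw [Matrix.det_of_isLowerTriangular L hL] at hdet
  exact IsUnit.prod_univ_iff.mp hdet i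

end LowerTriangular

lemma castAdd_lt_natAdd {r k : ℕ} (i : Fin r) (j : Fin k) : Fin.castAdd k i < Fin.natAdd r j :=
  i.isLt.trans_le (Nat.le_add_right r j)

lemma det_eq_mul_det_of_upperRight_eq_zero {α : Type*} [CommRing α] {r k : ℕ}
    {M : Matrix (Fin (r + k)) (Fin (r + k)) α}
    (hM : ∀ i j, M (Fin.castAdd k i) (Fin.natAdd r j) = 0) :
    M.det = (M.submatrix (Fin.castAdd k) (Fin.castAdd k)).det *
      (M.submatrix (Fin.natAdd r) (Fin.natAdd r)).det := by
  have hblocks : M.submatrix finSumFinEquiv finSumFinEquiv =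
      Matrix.fromBlocks (M.submatrix (Fin.castAdd k) (Fin.castAdd k)) 0
        (M.submatrix (Fin.natAdd r) (Fin.castAdd k))
        (M.submatrix (Fin.natAdd r) (Fin.natAdd r)) := by
    ext (i | i) (j | j) <;> simp [hM]
  rw [← Matrix.det_submatrix_equiv_self finSumFinEquiv M, hblocks, Matrix.det_fromBlocks_zero₁₂]

lemma unimodular_iff_isUnit_det {n : ℕ} {U : Matrix (Fin n) (Fin n) ℤ} :
    Unimodular U ↔ IsUnit U.det :=
  Int.isUnit_iff.symm

lemma Unimodular.submatrix_castAdd {r k : ℕ} {W : Matrix (Fin (r + k)) (Fin (r + k)) ℤ}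
    (hW : Unimodular W) (hzero : ∀ i j, W (Fin.castAdd k i) (Fin.natAdd r j) = 0) :
    Unimodular (W.submatrix (Fin.castAdd k) (Fin.castAdd k)) := by
  rw [unimodular_iff_isUnit_det, det_eq_mul_det_of_upperRight_eq_zero hzero] at hW
  exact unimodular_iff_isUnit_det.mpr (isUnit_of_mul_isUnit_left hW)

lemma stack_castAdd {r k n : ℕ} (A : Matrix (Fin r) (Fin n) ℤ) (B : Matrix (Fin k) (Fin n) ℤ)
    (i : Fin r) : stack A B (Fin.castAdd k i) = A i := by
  ext j
  simp [stack]

namespace LHNF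

variable {n : ℕ} {H K U : Matrix (Fin n) (Fin n) ℤ}

lemma isLowerTriangular (hH : LHNF H) : H.IsLowerTriangular :=
  fun i j hij => hH.1 i j hij

lemma diag_pos (hH : LHNF H) (i : Fin n) : 0 < H i i :=
  hH.2.1 i

lemma diag_ne_zero (hH : LHNF H) (i : Fin n) : H i i ≠ 0 :=
  (hH.diag_pos i).ne'

lemma submatrix {m : ℕ} (hH : LHNF H) {f : Fin m → Fin n} (hf : StrictMono f) :
    LHNF (H.submatrix f f) :=
  ⟨fun _ _ hij => hH.1 _ _ (hf hij), fun _ => hH.2.1 _, fun _ _ hji => hH.2.2 _ _ (hf hji)⟩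

lemma abs_sub_lt_diag (hH : LHNF H) (hK : LHNF K) (hdiag : ∀ i, H i i = K i i) (i j : Fin n) :
    |(H - K) i j| < K j j := by
  rw [Matrix.sub_apply]
  rcases lt_trichotomy i j with hij | rfl | hji
  · simpa only [hH.1 i j hij, hK.1 i j hij, sub_zero, abs_zero] using hK.diag_pos j
  · simpa only [hdiag, sub_self, abs_zero] using hK.diag_pos i
  · obtain ⟨hH₀, hH₁⟩ := hH.2.2 i j hji
    obtain ⟨hK₀, hK₁⟩ := hK.2.2 i j hji
    exact abs_sub_lt_of_nonneg_of_lt hH₀ (hdiag j ▸ hH₁) hK₀ hK₁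

theorem eq_of_eq_unimodular_mul (hH : LHNF H) (hK : LHNF K) (hU : Unimodular U)
    (h : H = U * K) : H = K := by
  have hUtri : U.IsLowerTriangular :=
    isLowerTriangular_of_mul hK.isLowerTriangular hK.diag_ne_zero (h ▸ hH.isLowerTriangular)
  have hdiag_mul (i : Fin n) : H i i = U i i * K i i := by
    rw [h, Matrix.mul_apply_eq_vecMul]
    exact vecMul_apply_of_isLowerTriangular hK.isLowerTriangular fun l hil => hUtri hil
  have hUdiag (i : Fin n) : U i i = 1 := by
    have hpos : 0 < U i i := pos_of_mul_pos_left (hdiag_mul i ▸ hH.diag_pos i) (hK.diag_pos i).le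
    have hunit := isUnit_diag_of_isLowerTriangular hUtri (unimodular_iff_isUnit_det.mp hU) i
    exact (Int.isUnit_iff.mp hunit).resolve_right (by lia)
  have hdiag (i : Fin n) : H i i = K i i := by rw [hdiag_mul, hUdiag, one_mul]
  have hsub : (U - 1) * K = H - K := by rw [Matrix.sub_mul, Matrix.one_mul, h]
  have hU_sub_one : U - 1 = 0 := by
    ext i j
    refine eq_zero_of_abs_vecMul_lt_abs_diag hK.isLowerTriangular isUpperSet_univ (fun l _ => ?_) j
      (Set.mem_univ j)
    rw [← Matrix.mul_apply_eq_vecMul, hsub]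
    exact (hH.abs_sub_lt_diag hK hdiag i l).trans_le (le_abs_self _)
  rw [h, sub_eq_zero.mp hU_sub_one, Matrix.one_mul]

end LHNF

/-- If `A` has the form `[N O]` with `N` an `r × r` matrix in left Hermite normal
form and `O` the zero block, and `[A; B] = W · R` for a unimodular `W` and a
nonsingular `R` in left Hermite normal form, then `A` equals the first `r` rows of
`R`. -/
theorem stmt_12 {r k : ℕ} (hr : 0 < r) (hk : 0 < k)
    (A : Matrix (Fin r) (Fin (r + k)) ℤ) (hrank : A.rank = r)
    (htri : ∀ (i : Fin r) (j : Fin (r + k)), (i : ℕ) < (j : ℕ) → A i j = 0)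
    (hdiag : ∀ i : Fin r, 0 < A i (Fin.castAdd k i))
    (hlt : ∀ i j : Fin r, j < i →
      0 ≤ A i (Fin.castAdd k j) ∧ A i (Fin.castAdd k j) < A j (Fin.castAdd k j))
    (B : Matrix (Fin k) (Fin (r + k)) ℤ)
    (W R : Matrix (Fin (r + k)) (Fin (r + k)) ℤ) (hW : Unimodular W)
    (hR : LHNF R) (hRdet : R.det ≠ 0)
    (h : stack A B = W * R) :
    ∀ (i : Fin r) (j : Fin (r + k)), A i j = R (Fin.castAdd k i) j := by
  have hrow (i : Fin r) : A i = W (Fin.castAdd k i) ᵥ* R := by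
    rw [← Matrix.mul_apply_eq_vecMul, ← h, stack_castAdd]
  have hW₁₂ (i : Fin r) (j : Fin k) : W (Fin.castAdd k i) (Fin.natAdd r j) = 0 := by
    refine eq_zero_of_vecMul_eq_zero_of_isUpperSet hR.isLowerTriangular hR.diag_ne_zero
      (isUpperSet_Ioi (Fin.castAdd k i)) (fun l hl => ?_) _ (castAdd_lt_natAdd i j)
    rw [← hrow, htri i l hl]
  have hN : LHNF (A.submatrix id (Fin.castAdd k)) := ⟨fun i j hij => htri i _ hij, hdiag, hlt⟩
  have hmul : A.submatrix id (Fin.castAdd k) =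
      W.submatrix (Fin.castAdd k) (Fin.castAdd k) *
        R.submatrix (Fin.castAdd k) (Fin.castAdd k) := by
    ext i j
    simp [hrow, Matrix.vecMul, dotProduct, Matrix.mul_apply, Fin.sum_univ_add, hW₁₂]
  have hNR := hN.eq_of_eq_unimodular_mul (hR.submatrix (Fin.strictMono_castAdd k))
    (hW.submatrix_castAdd hW₁₂) hmul
  intro i j
  induction j using Fin.addCases with
  | left j => exact congrFun₂ hNR i j
  | right j =>
    have hij := castAdd_lt_natAdd i j
    exact (htri i _ hij).trans (hR.isLowerTriangular hij).symm
end
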